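/- arXiv:1910.03036 — 2 statements merged into one kernel-verified Lean document; each statement's English description precedes it below -/
import Mathlib

section
/- For every a \in \mathbb{R} with a \notin -\mathbb{N}_0, \lim_{w \to 0,\, Re(w) > 0} \left( \operatorname{Log}(1/w) - \sum_{m \ge 0} \frac{e^{-w(m+a)}}{m+a} \right) = -C_a. -/
open Filter Topology Set

noncomputable section

/-- The constant `C_a = (1-a) ∑_{m≥0} 1/((m+a)(m+1))`. -/
def Cconst (a : ℝ) : ℝ := (1 - a) * ∑' m : ℕ, 1 / (((m : ℝ) + a) * ((m : ℝ) + 1))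

/-- The summands of `Cconst a` are absolutely summable. -/
theorem summable_inv_mul_inv (a : ℝ) :
    Summable fun m : ℕ => ‖(1 : ℂ) / (((m : ℂ) + a) * ((m : ℂ) + 1))‖ := by
  have hs : Summable fun m : ℕ => 2 * (1 / (m : ℝ) ^ 2) :=
    (Real.summable_one_div_nat_pow.mpr one_lt_two).mul_left 2
  refine hs.of_norm_bounded_eventually_nat ?_
  filter_upwards [eventually_ge_atTop (⌈2 * |a|⌉₊ + 1)] with m hm
  have hm' : 2 * |a| + 1 ≤ (m : ℝ) := by
    have h : ((⌈2 * |a|⌉₊ + 1 : ℕ) : ℝ) ≤ m := by exact_mod_cast hm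
    push_cast at h
    linarith [Nat.le_ceil (2 * |a|)]
  have hma : (m : ℝ) / 2 ≤ |(m : ℝ) + a| := by
    linarith [le_abs_self ((m : ℝ) + a), neg_abs_le a]
  have hm0 : (0 : ℝ) < m := by linarith [abs_nonneg a]
  have hm1 : (m : ℝ) ≤ |(m : ℝ) + 1| := by linarith [le_abs_self ((m : ℝ) + 1)]
  have hcast : ‖(1 : ℂ) / (((m : ℂ) + a) * ((m : ℂ) + 1))‖
      = 1 / (|(m : ℝ) + a| * |(m : ℝ) + 1|) := by
    rw [← abs_mul, norm_div, norm_one, ← Real.norm_eq_abs, ← Complex.norm_real]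
    push_cast
    rfl
  rw [norm_norm, hcast]
  calc 1 / (|(m : ℝ) + a| * |(m : ℝ) + 1|) ≤ 1 / ((m : ℝ) / 2 * m) := by gcongr
    _ = 2 * (1 / (m : ℝ) ^ 2) := by field_simp

theorem norm_exp_neg_pow_le_one {w : ℂ} (hw : 0 < w.re) (m : ℕ) :
    ‖Complex.exp (-w) ^ m‖ ≤ 1 := by
  rw [norm_pow]
  refine pow_le_one₀ (norm_nonneg _) ?_
  rw [Complex.norm_exp, Complex.neg_re]
  exact Real.exp_le_one_iff.mpr (by linarith)

theorem tendsto_tsum_exp_pow_mul (a : ℝ) :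
    Tendsto (fun w : ℂ => ∑' m : ℕ,
        Complex.exp (-w) ^ m * (1 / (((m : ℂ) + a) * ((m : ℂ) + 1))))
      (𝓝[{w : ℂ | 0 < w.re}] 0) (𝓝 (∑' m : ℕ, 1 / (((m : ℂ) + a) * ((m : ℂ) + 1)))) := by
  refine tendsto_tsum_of_dominated_convergence (summable_inv_mul_inv a) (fun m => ?_) ?_
  · have h : Continuous fun w : ℂ =>
        Complex.exp (-w) ^ m * (1 / (((m : ℂ) + a) * ((m : ℂ) + 1))) := by fun_prop
    simpa using (h.tendsto 0).mono_left nhdsWithin_le_nhds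
  · filter_upwards [self_mem_nhdsWithin] with w hw m
    rw [norm_mul]
    exact mul_le_of_le_one_left (norm_nonneg _) (norm_exp_neg_pow_le_one hw m)

theorem tsum_exp_div_eq (a : ℝ) (ha : ∀ k : ℕ, a ≠ -(k : ℝ)) {w : ℂ} (hw : 0 < w.re) :
    ∑' m : ℕ, Complex.exp (-w * ((m : ℂ) + (a : ℂ))) / ((m : ℂ) + (a : ℂ))
      = -(Complex.exp ((1 - a) * w) * Complex.log (1 - Complex.exp (-w)))
        + Complex.exp (-w * a) * ((1 - a) * ∑' m : ℕ,
          Complex.exp (-w) ^ m * (1 / (((m : ℂ) + a) * ((m : ℂ) + 1)))) := by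
  have hz : ‖Complex.exp (-w)‖ < 1 := by
    rw [Complex.norm_exp, Complex.neg_re]
    exact Real.exp_lt_one_iff.mpr (by linarith)
  have hlog := ((hasSum_nat_add_iff' 1).mpr (Complex.hasSum_taylorSeries_neg_log hz)).mul_left
    (Complex.exp ((1 - a) * w))
  have hsum : Summable fun m : ℕ =>
      Complex.exp (-w) ^ m * (1 / (((m : ℂ) + a) * ((m : ℂ) + 1))) := by
    refine (summable_inv_mul_inv a).of_norm_bounded fun m => ?_
    rw [norm_mul]
    exact mul_le_of_le_one_left (norm_nonneg _) (norm_exp_neg_pow_le_one hw m)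
  have htot := hlog.add ((hsum.hasSum.mul_left (1 - (a : ℂ))).mul_left (Complex.exp (-w * a)))
  simp only [Finset.range_one, Finset.sum_singleton, Nat.cast_zero, div_zero, sub_zero,
    mul_neg] at htot
  rw [← htot.tsum_eq]
  refine tsum_congr fun m => ?_
  have h1 : (m : ℂ) + a ≠ 0 := by
    intro h
    have h' : (m : ℝ) + a = 0 := by exact_mod_cast h
    exact ha m (by linarith)
  have h2 : (m : ℂ) + 1 ≠ 0 := Nat.cast_add_one_ne_zero m
  have e1 : Complex.exp (-w * ((m : ℂ) + a)) = Complex.exp (-w * a) * Complex.exp (-w) ^ m := by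
    rw [← Complex.exp_nat_mul, ← Complex.exp_add]
    ring_nf
  have e2 : Complex.exp ((1 - a) * w) * Complex.exp (-w) ^ (m + 1)
      = Complex.exp (-w * a) * Complex.exp (-w) ^ m := by
    rw [← Complex.exp_nat_mul, ← Complex.exp_nat_mul, ← Complex.exp_add, ← Complex.exp_add]
    push_cast
    ring_nf
  rw [e1, mul_div_assoc', e2]
  push_cast
  field_simp
  ring

theorem tendsto_mul_log_nhds_zero :
    Tendsto (fun w : ℂ => w * Complex.log w) (𝓝 0) (𝓝 0) := by
  have hn : Tendsto (fun w : ℂ => ‖w‖) (𝓝 0) (𝓝 0) := tendsto_norm_zero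
  have hlog : Tendsto (fun w : ℂ => |‖w‖ * Real.log ‖w‖| + ‖w‖ * Real.pi) (𝓝 0) (𝓝 0) := by
    have h := ((Real.continuous_mul_log.tendsto 0).comp hn).abs.add (hn.mul_const Real.pi)
    simpa using h
  refine squeeze_zero_norm (fun w => ?_) hlog
  have h : ‖Complex.log w‖ ≤ |Real.log ‖w‖| + Real.pi := by
    refine (Complex.norm_le_abs_re_add_abs_im _).trans ?_
    rw [Complex.log_re, Complex.log_im]
    gcongr
    exact Complex.abs_arg_le_pi w
  rw [norm_mul, abs_mul, abs_norm, ← mul_add]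
  gcongr

theorem tendsto_exp_mul_sub_one_div (c : ℂ) :
    Tendsto (fun w : ℂ => (Complex.exp (c * w) - 1) / w) (𝓝[≠] 0) (𝓝 c) := by
  have h : HasDerivAt (fun w : ℂ => Complex.exp (c * w)) c 0 := by
    simpa using ((hasDerivAt_id (0 : ℂ)).const_mul c).cexp
  have := h.tendsto_slope
  refine this.congr fun w => ?_
  simp [slope_def_field]

/-- As `w → 0` in the right half-plane,
`Log(1/w) - ∑_{m≥0} e^{-w(m+a)}/(m+a) → -C_a`. -/
theorem log_sum_tendsto_neg_Cconst (a : ℝ) (ha : ∀ k : ℕ, a ≠ -(k : ℝ)) :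
    Tendsto (fun w : ℂ =>
        Complex.log (1 / w) -
          ∑' m : ℕ, Complex.exp (-w * ((m : ℂ) + (a : ℂ))) / ((m : ℂ) + (a : ℂ)))
      (𝓝[{w : ℂ | 0 < w.re}] 0) (𝓝 (-(Cconst a : ℂ))) := by
  have hle : 𝓝[{w : ℂ | 0 < w.re}] (0 : ℂ) ≤ 𝓝[≠] 0 :=
    nhdsWithin_mono _ fun w hw h => by simp_all
  have hq : Tendsto (fun w : ℂ => (1 - Complex.exp (-w)) / w)
      (𝓝[{w : ℂ | 0 < w.re}] 0) (𝓝 1) := by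
    have h := ((tendsto_exp_mul_sub_one_div (-1)).mono_left hle).neg
    rw [neg_neg] at h
    refine h.congr fun w => ?_
    rw [neg_one_mul, ← neg_div, neg_sub]
  have hlogq : Tendsto (fun w : ℂ => Complex.log ((1 - Complex.exp (-w)) / w))
      (𝓝[{w : ℂ | 0 < w.re}] 0) (𝓝 0) := by
    simpa using hq.clog Complex.one_mem_slitPlane
  have hexp (c : ℂ) : Tendsto (fun w : ℂ => Complex.exp (w * c))
      (𝓝[{w : ℂ | 0 < w.re}] 0) (𝓝 1) := by
    have h : Continuous fun w : ℂ => Complex.exp (w * c) := by fun_prop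
    simpa using (h.tendsto 0).mono_left nhdsWithin_le_nhds
  have hmain := (((tendsto_exp_mul_sub_one_div (1 - a)).mono_left hle).mul
    (tendsto_mul_log_nhds_zero.mono_left nhdsWithin_le_nhds)).add
    ((hexp (1 - a)).mul hlogq) |>.sub
    ((hexp (-a)).mul ((tendsto_tsum_exp_pow_mul a).const_mul (1 - (a : ℂ))))
  have hC : (1 - (a : ℂ)) * 0 + 1 * 0
      - 1 * ((1 - a) * ∑' m : ℕ, 1 / (((m : ℂ) + a) * ((m : ℂ) + 1))) = -(Cconst a : ℂ) := by
    simp [Cconst, Complex.ofReal_tsum]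
  rw [hC] at hmain
  have harg : ∀ᶠ w in 𝓝[{w : ℂ | 0 < w.re}] (0 : ℂ),
      |((1 - Complex.exp (-w)) / w).arg| < Real.pi / 2 := by
    filter_upwards [hq.eventually
      ((isOpen_lt continuous_const Complex.continuous_re).mem_nhds
        (show (0 : ℝ) < (1 : ℂ).re by simp))] with w hw
    exact Complex.abs_arg_lt_pi_div_two_iff.mpr (Or.inl hw)
  refine hmain.congr' ?_
  filter_upwards [self_mem_nhdsWithin, harg, hq.eventually_ne one_ne_zero] with w hw hwarg hq0
  have hw0 : w ≠ 0 := by rintro rfl; simp at hw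
  have hargw : |w.arg| < Real.pi / 2 := Complex.abs_arg_lt_pi_div_two_iff.mpr (Or.inl hw)
  rw [abs_lt] at hwarg hargw
  have hlog : Complex.log (1 - Complex.exp (-w))
      = Complex.log ((1 - Complex.exp (-w)) / w) + Complex.log w := by
    rw [← Complex.log_mul hq0 hw0 ⟨by linarith, by linarith⟩, div_mul_cancel₀ _ hw0]
  rw [tsum_exp_div_eq a ha hw, one_div, Complex.log_inv _ (by linarith [Real.pi_pos]), hlog,
    mul_comm (1 - (a : ℂ)) w, mul_neg, neg_mul]
  field_simp
  ring

end
end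

section
/- Let p(n) denote the number of partitions of n and P(q) = \sum_{n \ge 0} p(n) q^n its generating function, converging for |q| < 1. For every \Delta > 0, in the region of complex numbers z = x + iy with x > 0 and |y| \le \Delta x, one has P(e^{-z}) \sim \sqrt{\frac{z}{2\pi}}\, e^{\pi^2/(6z)} as z \to 0; that is, P(e^{-z}) \sqrt{2\pi/z}\, e^{-\pi^2/(6z)} \to 1 as z \to 0 within any such region. -/
open Filter Topology Set

noncomputable section

/-- The partition function `p(n)`. -/
def partitionFun (n : ℕ) : ℕ := Fintype.card (Nat.Partition n)

section PartitionProduct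

open PowerSeries
open scoped PowerSeries.WithPiTopology

/-- The geometric power series `∑ X ^ (m * j)`. -/
def geomSeries (R : Type*) [Semiring R] (m : ℕ) : R⟦X⟧ := .mk fun n ↦ if m ∣ n then 1 else 0

theorem geomSeries_mul_one_sub_X_pow {R : Type*} [CommRing R] {m : ℕ} (hm : 0 < m) :
    geomSeries R m * (1 - X ^ m) = 1 := by
  ext n
  rw [mul_sub, mul_one, map_sub, coeff_mul_X_pow', coeff_one]
  simp only [geomSeries, coeff_mk]
  rcases Nat.eq_zero_or_pos n with rfl | hn
  · simp [hm.ne']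
  by_cases h : m ≤ n
  · rw [if_pos h, if_neg hn.ne']
    simp only [(Nat.dvd_sub_iff_left h (dvd_refl m)), sub_self]
  · simp [h, hn.ne', mt (Nat.le_of_dvd hn) h]

variable {𝕜 : Type*} [NormedField 𝕜]

theorem geomSeries_eq_tsum {m : ℕ} (hm : 0 < m) :
    geomSeries 𝕜 m = ∑' j : ℕ, X ^ (m * j) := by
  simp_rw [pow_mul]
  refine left_inv_eq_right_inv (geomSeries_mul_one_sub_X_pow hm) ?_
  exact WithPiTopology.one_sub_mul_tsum_pow_of_constantCoeff_eq_zero (by simp [hm.ne'])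

theorem prod_geomSeries_eq_mk_card_restricted (N : ℕ) :
    ∏ i ∈ Finset.range N, geomSeries 𝕜 (i + 1) =
      .mk fun n ↦ ((Nat.Partition.restricted n (· ≤ N)).card : 𝕜) := by
  refine HasProd.unique ?_ (Nat.Partition.hasProd_powerSeriesMk_card_restricted 𝕜 (· ≤ N))
  rw [Finset.prod_congr rfl
    (g := fun i ↦ if i + 1 ≤ N then ∑' j : ℕ, (X : 𝕜⟦X⟧) ^ ((i + 1) * j) else 1)]
  · exact hasProd_prod_of_ne_finset_one fun i hi ↦ if_neg (by simpa using hi)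
  · intro i hi
    rw [if_pos (by simpa using hi), geomSeries_eq_tsum i.succ_pos]

theorem card_restricted_le_partitionFun (n N : ℕ) :
    (Nat.Partition.restricted n (· ≤ N)).card ≤ partitionFun n :=
  Finset.card_le_univ _

theorem card_restricted_eq_partitionFun {n N : ℕ} (h : n ≤ N) :
    (Nat.Partition.restricted n (· ≤ N)).card = partitionFun n := by
  rw [Nat.Partition.restricted, Finset.filter_true_of_mem, Finset.card_univ, partitionFun]
  exact fun p _ i hi ↦ (p.le_of_mem_parts hi).trans h

variable {q : 𝕜}

theorem summable_norm_geomSeries (hq : ‖q‖ < 1) (m : ℕ) :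
    Summable fun n ↦ ‖(geomSeries 𝕜 m).coeff n * q ^ n‖ := by
  refine (summable_geometric_of_lt_one (norm_nonneg q) hq).of_nonneg_of_le
    (fun _ ↦ norm_nonneg _) fun n ↦ ?_
  rw [geomSeries, coeff_mk]
  split_ifs <;> simp

theorem tsum_geomSeries (hq : ‖q‖ < 1) {m : ℕ} (hm : 0 < m) :
    ∑' n, (geomSeries 𝕜 m).coeff n * q ^ n = (1 - q ^ m)⁻¹ := by
  rw [← tsum_geometric_of_norm_lt_one (ξ := q ^ m)
    (by rw [norm_pow]; exact pow_lt_one₀ (norm_nonneg _) hq hm.ne')]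
  rw [← (mul_right_injective₀ hm.ne').tsum_eq]
  · simp [geomSeries, pow_mul]
  · intro n hn
    by_contra h
    refine hn ?_
    simp only [geomSeries, coeff_mk]
    rw [if_neg, zero_mul]
    rintro ⟨k, rfl⟩
    exact h ⟨k, rfl⟩

theorem coeff_mul_mul_pow (A B : 𝕜⟦X⟧) (n : ℕ) :
    (A * B).coeff n * q ^ n =
      ∑ kl ∈ Finset.HasAntidiagonal.antidiagonal n, (A.coeff kl.1 * q ^ kl.1) * (B.coeff kl.2 * q ^ kl.2) := by
  rw [coeff_mul, Finset.sum_mul]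
  refine Finset.sum_congr rfl fun kl hkl ↦ ?_
  rw [← Finset.HasAntidiagonal.mem_antidiagonal.mp hkl, pow_add]
  ring

theorem summable_norm_coeff_mul {A B : 𝕜⟦X⟧} (hA : Summable fun n ↦ ‖A.coeff n * q ^ n‖)
    (hB : Summable fun n ↦ ‖B.coeff n * q ^ n‖) :
    Summable fun n ↦ ‖(A * B).coeff n * q ^ n‖ := by
  simp_rw [coeff_mul_mul_pow]
  exact summable_norm_sum_mul_antidiagonal_of_summable_norm
    (f := fun n ↦ A.coeff n * q ^ n) (g := fun n ↦ B.coeff n * q ^ n) hA hB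

variable [CompleteSpace 𝕜]

theorem tsum_coeff_mul {A B : 𝕜⟦X⟧} (hA : Summable fun n ↦ ‖A.coeff n * q ^ n‖)
    (hB : Summable fun n ↦ ‖B.coeff n * q ^ n‖) :
    ∑' n, (A * B).coeff n * q ^ n = (∑' n, A.coeff n * q ^ n) * ∑' n, B.coeff n * q ^ n := by
  simp_rw [coeff_mul_mul_pow]
  exact (tsum_mul_tsum_eq_tsum_sum_antidiagonal_of_summable_norm hA hB).symm

theorem summable_and_tsum_prod_geomSeries (hq : ‖q‖ < 1) (N : ℕ) :
    Summable (fun n ↦ ‖(∏ i ∈ Finset.range N, geomSeries 𝕜 (i + 1)).coeff n * q ^ n‖) ∧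
      ∑' n, (∏ i ∈ Finset.range N, geomSeries 𝕜 (i + 1)).coeff n * q ^ n =
        ∏ i ∈ Finset.range N, (1 - q ^ (i + 1))⁻¹ := by
  induction N with
  | zero =>
    simp only [Finset.range_zero, Finset.prod_empty, coeff_one, ite_mul, one_mul, zero_mul]
    refine ⟨summable_of_ne_finset_zero (s := {0}) fun n hn ↦ ?_, ?_⟩
    · simp_all
    · rw [tsum_ite_eq 0 (fun n ↦ q ^ n), pow_zero]
  | succ N ih =>
    have hg := summable_norm_geomSeries hq (N + 1)
    simp only [Finset.prod_range_succ]
    exact ⟨summable_norm_coeff_mul ih.1 hg, by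
      rw [tsum_coeff_mul ih.1 hg, ih.2, tsum_geomSeries hq N.succ_pos]⟩

theorem summable_card_restricted_mul_pow (hq : ‖q‖ < 1) (N : ℕ) :
    Summable fun n ↦ ‖((Nat.Partition.restricted n (· ≤ N)).card : 𝕜) * q ^ n‖ := by
  simpa [prod_geomSeries_eq_mk_card_restricted] using
    (summable_and_tsum_prod_geomSeries hq N).1

theorem tsum_card_restricted_mul_pow (hq : ‖q‖ < 1) (N : ℕ) :
    ∑' n, ((Nat.Partition.restricted n (· ≤ N)).card : 𝕜) * q ^ n =
      ∏ i ∈ Finset.range N, (1 - q ^ (i + 1))⁻¹ := by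
  simpa [prod_geomSeries_eq_mk_card_restricted] using
    (summable_and_tsum_prod_geomSeries hq N).2

theorem tendsto_prod_inv_one_sub_pow (hq : ‖q‖ < 1) :
    Tendsto (fun N ↦ ∏ i ∈ Finset.range N, (1 - q ^ (i + 1))⁻¹) atTop
      (𝓝 (∏' i : ℕ, (1 - q ^ (i + 1)))⁻¹) := by
  have hs : Summable fun i : ℕ ↦ ‖-q ^ (i + 1)‖ := by
    simpa using (summable_nat_add_iff 1).mpr (summable_geometric_of_lt_one (norm_nonneg q) hq)
  simp only [Finset.prod_inv_distrib, sub_eq_add_neg]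
  refine Tendsto.inv₀ (multipliable_one_add_of_summable hs).hasProd.tendsto_prod_nat
    (tprod_one_add_ne_zero_of_summable (fun i h ↦ ?_) hs)
  have h1 : q ^ (i + 1) = 1 := by linear_combination -h
  have h2 : ‖q‖ ^ (i + 1) < 1 := pow_lt_one₀ (norm_nonneg _) hq i.succ_ne_zero
  rw [← norm_pow, h1, norm_one] at h2
  exact lt_irrefl _ h2

theorem summable_partitionFun_mul_pow {r : ℝ} (hr0 : 0 ≤ r) (hr : r < 1) :
    Summable fun n ↦ (partitionFun n : ℝ) * r ^ n := by
  have hr' : ‖r‖ < 1 := by rwa [Real.norm_of_nonneg hr0]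
  obtain ⟨C, hC⟩ := (tendsto_prod_inv_one_sub_pow hr').bddAbove_range
  refine summable_of_sum_range_le (c := C) (fun n ↦ by positivity) fun N ↦ ?_
  calc ∑ n ∈ Finset.range N, (partitionFun n : ℝ) * r ^ n
      = ∑ n ∈ Finset.range N, ((Nat.Partition.restricted n (· ≤ N)).card : ℝ) * r ^ n :=
        Finset.sum_congr rfl fun n hn ↦ by
          rw [card_restricted_eq_partitionFun (Finset.mem_range.mp hn).le]
    _ ≤ ∑' n, ((Nat.Partition.restricted n (· ≤ N)).card : ℝ) * r ^ n :=
        (summable_card_restricted_mul_pow hr' N).of_norm.sum_le_tsum _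
          fun n _ ↦ by positivity
    _ ≤ C := by
        rw [tsum_card_restricted_mul_pow hr' N]
        exact hC ⟨N, rfl⟩

/-- Euler's product formula for the generating function of the partition numbers. -/
theorem tsum_partitionFun_mul_pow {q : ℂ} (hq : ‖q‖ < 1) :
    ∑' n, (partitionFun n : ℂ) * q ^ n = (∏' i : ℕ, (1 - q ^ (i + 1)))⁻¹ := by
  refine tendsto_nhds_unique ?_ (tendsto_prod_inv_one_sub_pow hq)
  simp_rw [← tsum_card_restricted_mul_pow hq]
  refine tendsto_tsum_of_dominated_convergence
    (summable_partitionFun_mul_pow (norm_nonneg q) hq) (fun n ↦ ?_) (.of_forall fun N n ↦ ?_)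
  · refine tendsto_atTop_of_eventually_const (i₀ := n) fun N hN ↦ ?_
    rw [card_restricted_eq_partitionFun hN]
  · rw [norm_mul, norm_pow, Complex.norm_natCast]
    gcongr
    exact card_restricted_le_partitionFun n N

end PartitionProduct

section Asymptotic

open Complex

theorem tendsto_tprod_one_sub_pow_nhds_zero :
    Tendsto (fun q : ℂ ↦ ∏' i : ℕ, (1 - q ^ (i + 1))) (𝓝 0) (𝓝 1) := by
  have h := (ModularForm.differentiableOn_tprod_one_sub_pow.differentiableAt
    (Metric.ball_mem_nhds (0 : ℂ) one_pos)).continuousAt.tendsto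
  simpa using h

theorem sqrt_I_mul {w : ℂ} (hw : 0 < w.re) : sqrt (I * w) = sqrt I * sqrt w := by
  have hw0 : w ≠ 0 := fun h ↦ by simp [h] at hw
  have harg := abs_lt.mp (abs_arg_lt_pi_div_two_iff.mpr (Or.inl hw))
  have hlog : log (I * w) = log I + log w := by
    refine (log_mul_eq_add_log_iff I_ne_zero hw0).mpr ?_
    rw [arg_I]
    constructor <;> linarith [Real.pi_pos]
  simp only [sqrt]
  rw [cpow_def_of_ne_zero (mul_ne_zero I_ne_zero hw0), cpow_def_of_ne_zero I_ne_zero,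
    cpow_def_of_ne_zero hw0, hlog, add_mul, exp_add]

/-- The transformation law of the Dedekind eta function, for Euler's product `∏ (1 - q ^ n)`
at `q = exp (-z)`. -/
theorem tprod_one_sub_exp_neg {z : ℂ} (hz : 0 < z.re) :
    exp (-(Real.pi : ℂ) ^ 2 / (6 * z)) *
        ∏' i : ℕ, (1 - exp (-(4 * (Real.pi : ℂ) ^ 2 / z)) ^ (i + 1)) =
      sqrt (z / (2 * Real.pi)) * (exp (-z / 24) * ∏' i : ℕ, (1 - exp (-z) ^ (i + 1))) := by
  have hz0 : z ≠ 0 := fun h ↦ by simp [h] at hz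
  have hpi : (Real.pi : ℂ) ≠ 0 := by exact_mod_cast Real.pi_ne_zero
  have hre : 0 < (z / (2 * Real.pi)).re := by
    rw [show (2 * Real.pi : ℂ) = ((2 * Real.pi : ℝ) : ℂ) by push_cast; rfl, div_ofReal_re]
    positivity
  have hI : sqrt I ≠ 0 := by simp [sqrt]
  have hτ : I * (z / (2 * Real.pi)) ∈ UpperHalfPlane.upperHalfPlaneSet := by
    simpa [UpperHalfPlane.upperHalfPlaneSet] using hre
  have h := ModularForm.eta_comp_eq_csqrt_I_inv hτ
  simp only [Function.comp_apply, Pi.smul_apply, Pi.mul_apply, smul_eq_mul, sqrt_I_mul hre,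
    ModularForm.eta, ModularForm.eta_q, Function.Periodic.qParam] at h
  have h2 : I ^ 2 = -1 := I_sq
  rw [show 2 * Real.pi * I * (I * (z / (2 * Real.pi))) / ((24 : ℝ) : ℂ) = -z / 24 by
      push_cast; field_simp; linear_combination h2,
    show 2 * Real.pi * I * (I * (z / (2 * Real.pi))) / ((1 : ℝ) : ℂ) = -z by
      push_cast; field_simp; linear_combination h2,
    show 2 * Real.pi * I * (-1 / (I * (z / (2 * Real.pi)))) / ((24 : ℝ) : ℂ) =
      -(Real.pi : ℂ) ^ 2 / (6 * z) by push_cast; field_simp; norm_num,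
    show 2 * Real.pi * I * (-1 / (I * (z / (2 * Real.pi)))) / ((1 : ℝ) : ℂ) =
      -(4 * (Real.pi : ℂ) ^ 2 / z) by push_cast; field_simp; norm_num] at h
  rw [h]
  field_simp

theorem cpow_half_two_pi_div_mul_sqrt {z : ℂ} (hz : 0 < z.re) :
    (2 * (Real.pi : ℂ) / z) ^ ((1 : ℂ) / 2) * sqrt (z / (2 * Real.pi)) = 1 := by
  have hz0 : z ≠ 0 := fun h ↦ by simp [h] at hz
  have hre : 0 < (z / (2 * Real.pi)).re := by
    rw [show (2 * Real.pi : ℂ) = ((2 * Real.pi : ℝ) : ℂ) by push_cast; rfl, div_ofReal_re]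
    positivity
  have hw0 : z / (2 * Real.pi) ≠ 0 := fun h ↦ by simp [h] at hre
  have harg : (z / (2 * Real.pi)).arg ≠ Real.pi := by
    have := (abs_lt.mp (abs_arg_lt_pi_div_two_iff.mpr (Or.inl hre))).2
    linarith [Real.pi_pos]
  rw [← inv_div, inv_cpow _ _ harg, sqrt, one_div]
  exact inv_mul_cancel₀ (by simp [cpow_eq_zero_iff, hw0])

theorem tendsto_exp_neg_div_of_sector (Δ : ℝ) {c : ℝ} (hc : 0 < c) :
    Tendsto (fun z : ℂ ↦ exp (-(c / z))) (𝓝[{z : ℂ | 0 < z.re ∧ |z.im| ≤ Δ * z.re}] 0) (𝓝 0) := by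
  have hre : Tendsto (fun z : ℂ ↦ z.re)
      (𝓝[{z : ℂ | 0 < z.re ∧ |z.im| ≤ Δ * z.re}] 0) (𝓝[>] 0) := by
    refine tendsto_nhdsWithin_iff.mpr ⟨?_, ?_⟩
    · exact (continuous_re.tendsto' 0 0 rfl).mono_left nhdsWithin_le_nhds
    · filter_upwards [self_mem_nhdsWithin] with z hz using hz.1
  have hk : 0 < c / (1 + Δ ^ 2) := by positivity
  have hlim := Real.tendsto_exp_neg_atTop_nhds_zero.comp
    ((tendsto_inv_nhdsGT_zero.comp hre).const_mul_atTop hk)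
  refine squeeze_zero_norm' ?_ hlim
  filter_upwards [self_mem_nhdsWithin] with z ⟨hz, hzim⟩
  have him : z.im ^ 2 ≤ Δ ^ 2 * z.re ^ 2 := by
    rw [← mul_pow, ← sq_abs z.im]
    exact pow_le_pow_left₀ (abs_nonneg _) hzim 2
  have hN : 0 < normSq z := normSq_pos.mpr fun h ↦ by simp [h] at hz
  simp only [Function.comp_apply, norm_exp, Real.exp_le_exp, neg_re, neg_le_neg_iff]
  rw [div_eq_mul_inv (c : ℂ), re_ofReal_mul, inv_re, div_mul_eq_mul_div, mul_div_assoc]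
  refine mul_le_mul_of_nonneg_left ?_ hc.le
  rw [inv_eq_one_div, div_div, div_le_div_iff₀ (by positivity) hN, normSq_apply]
  nlinarith

/-- In any region `{z = x+iy : x > 0, |y| ≤ Δ x}`, the partition generating function
satisfies `P(e^{-z}) ~ √(z/(2π)) e^{π²/(6z)}` as `z → 0`; equivalently
`P(e^{-z}) √(2π/z) e^{-π²/(6z)} → 1`. -/
theorem partition_generating_function_asymptotic (Δ : ℝ) (hΔ : 0 < Δ) :
    Tendsto (fun z : ℂ =>
        (∑' n : ℕ, (partitionFun n : ℂ) * Complex.exp (-z * (n : ℂ))) *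
          (2 * (Real.pi : ℂ) / z) ^ ((1 : ℂ) / 2) *
          Complex.exp (-(Real.pi : ℂ) ^ 2 / (6 * z)))
      (𝓝[{z : ℂ | 0 < z.re ∧ |z.im| ≤ Δ * z.re}] 0) (𝓝 1) := by
  have hD := tendsto_tprod_one_sub_pow_nhds_zero.comp
    (tendsto_exp_neg_div_of_sector Δ (c := 4 * Real.pi ^ 2) (by positivity))
  have hE : Tendsto (fun z : ℂ ↦ exp (-z / 24))
      (𝓝[{z : ℂ | 0 < z.re ∧ |z.im| ≤ Δ * z.re}] 0) (𝓝 1) :=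
    ((by fun_prop : Continuous fun z : ℂ ↦ exp (-z / 24)).tendsto' 0 1 (by simp)).mono_left
      nhdsWithin_le_nhds
  have hlim := hE.div hD one_ne_zero
  rw [div_one] at hlim
  refine hlim.congr' ?_
  filter_upwards [self_mem_nhdsWithin, hD.eventually_ne one_ne_zero] with z ⟨hz, _⟩ hne
  have hq : ‖exp (-z)‖ < 1 := by
    rw [norm_exp, neg_re, Real.exp_lt_one_iff]
    linarith
  have hP : ∑' n : ℕ, (partitionFun n : ℂ) * exp (-z * n) =
      (∏' i : ℕ, (1 - exp (-z) ^ (i + 1)))⁻¹ := by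
    rw [← tsum_partitionFun_mul_pow hq]
    exact tsum_congr fun n ↦ by rw [← exp_nat_mul, mul_comm (-z)]
  have hfe := tprod_one_sub_exp_neg hz
  have hs := cpow_half_two_pi_div_mul_sqrt hz
  simp only [Function.comp_apply, Pi.div_apply] at hne ⊢
  push_cast at hne ⊢
  rw [hP]
  have hprod : ∏' i : ℕ, (1 - exp (-z) ^ (i + 1)) ≠ 0 := fun h ↦ by
    rw [h, mul_zero, mul_zero] at hfe
    exact mul_ne_zero (exp_ne_zero _) hne hfe
  rw [div_eq_iff hne, mul_assoc, mul_assoc, hfe, ← mul_assoc (_ ^ _), hs, one_mul, mul_comm (exp _),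
    inv_mul_cancel_left₀ hprod]

end Asymptotic

end
end
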